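/- arXiv:2510.03201 — 5 statements merged into one kernel-verified Lean document; each statement's English description precedes it below -/
import Mathlib

section
/- Let v be a nonincreasing classical solution of the cascade of moving-boundary PDEs. Then for every nonempty I ⊆ [N] and every (t,x) ∈ [0,T]×ℝ^I: (i) for each i ∈ [N], the value v^{I∖ℓ,i}_t(x^{−ℓ}) is the same for all ℓ ∈ ℐ^I v(t,x); (ii) for every i ∈ I and every J ⊆ I, v^{J,i}_t(x^J) ≥ v^{I,i}_t(x). -/
open Set Filter
open scoped Topology

variable (N : ℕ) (T σ : ℝ) (D : Fin N → Fin N → ℝ)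

/-- The boundary level `Σ_j D_{ij} v^{I∖i,j}_t(x^{−i})` felt by particle `i` in configuration `I`.
Functions `v^{I,i} : [0,T]×ℝ^I → ℝ` are represented as functions on `ℝ × (Fin N → ℝ)` that only
depend on the coordinates in `I`. -/
def bdrySum (v : Finset (Fin N) → Fin N → ℝ → (Fin N → ℝ) → ℝ) (I : Finset (Fin N))
    (i : Fin N) (t : ℝ) (x : Fin N → ℝ) : ℝ :=
  ∑ j, D i j * v (I.erase i) j t x

/-- The domain `𝒟^I_T v` where all particles of the configuration `I` are alive. -/
def domT (v : Finset (Fin N) → Fin N → ℝ → (Fin N → ℝ) → ℝ) (I : Finset (Fin N)) :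
    Set (ℝ × (Fin N → ℝ)) :=
  {p | p.1 ∈ Set.Icc 0 T ∧ ∀ i ∈ I, bdrySum N D v I i p.1 p.2 < p.2 i}

/-- The domain `𝒟^I v = 𝒟^I_T v ∖ ({T}×ℝ^I)`. -/
def dom (v : Finset (Fin N) → Fin N → ℝ → (Fin N → ℝ) → ℝ) (I : Finset (Fin N)) :
    Set (ℝ × (Fin N → ℝ)) :=
  domT N T D v I ∩ {p | p.1 < T}

/-- The index set `ℐ^I v(t,x)` of killed particles. -/
noncomputable def killedSet (v : Finset (Fin N) → Fin N → ℝ → (Fin N → ℝ) → ℝ)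
    (I : Finset (Fin N)) (t : ℝ) (x : Fin N → ℝ) : Finset (Fin N) :=
  I.filter fun i => x i ≤ bdrySum N D v I i t x

/-- The boundary function `ℱ^I_i v(t,x) = v^{I∖i₀,i}_t(x^{−i₀})`, where `i₀` is the minimal
index of `ℐ^I v(t,x)` (junk value `v^{I,i}_t(x)` if no particle is killed). -/
noncomputable def bdryFun (v : Finset (Fin N) → Fin N → ℝ → (Fin N → ℝ) → ℝ)
    (I : Finset (Fin N)) (i : Fin N) (t : ℝ) (x : Fin N → ℝ) : ℝ :=
  if h : (killedSet N D v I t x).Nonempty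
  then v (I.erase ((killedSet N D v I t x).min' h)) i t x
  else v I i t x

/-- `f` is `C^{1,2}` on `U` (with spatial variables ranging over the coordinates of `I`)
and solves the backward heat equation `∂_t f + (σ²/2) Δ f = 0` there. -/
def SolvesHeatOn (I : Finset (Fin N)) (f : ℝ → (Fin N → ℝ) → ℝ)
    (U : Set (ℝ × (Fin N → ℝ))) : Prop :=
  ∃ (ft : ℝ → (Fin N → ℝ) → ℝ) (fx fxx : ℝ → (Fin N → ℝ) → Fin N → ℝ),
    (∀ p ∈ U, HasDerivWithinAt (fun s => f s p.2) (ft p.1 p.2) (Set.Icc 0 T) p.1) ∧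
    (∀ p ∈ U, ∀ j ∈ I,
      HasDerivAt (fun y => f p.1 (Function.update p.2 j y)) (fx p.1 p.2 j) (p.2 j)) ∧
    (∀ p ∈ U, ∀ j ∈ I,
      HasDerivAt (fun y => fx p.1 (Function.update p.2 j y) j) (fxx p.1 p.2 j) (p.2 j)) ∧
    ContinuousOn (fun p : ℝ × (Fin N → ℝ) => ft p.1 p.2) U ∧
    (∀ j ∈ I, ContinuousOn (fun p : ℝ × (Fin N → ℝ) => fx p.1 p.2 j) U) ∧
    (∀ j ∈ I, ContinuousOn (fun p : ℝ × (Fin N → ℝ) => fxx p.1 p.2 j) U) ∧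
    (∀ p ∈ U, ft p.1 p.2 + σ ^ 2 / 2 * ∑ j ∈ I, fxx p.1 p.2 j = 0)

/-- `v` is a classical solution of the cascade of moving boundary PDEs. -/
def IsClassicalSolution (v : Finset (Fin N) → Fin N → ℝ → (Fin N → ℝ) → ℝ) : Prop :=
  ∀ I : Finset (Fin N),
    (∀ i : Fin N, ∀ t ∈ Set.Icc (0 : ℝ) T, ∀ x y : Fin N → ℝ,
      (∀ j ∈ I, x j = y j) → v I i t x = v I i t y) ∧
    (∀ i ∉ I, ∀ t ∈ Set.Icc (0 : ℝ) T, ∀ x : Fin N → ℝ, v I i t x = 1) ∧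
    ∀ i ∈ I,
      (∃ U : Set (ℝ × (Fin N → ℝ)), IsOpen U ∧
        dom N T D v I = U ∩ {p : ℝ × (Fin N → ℝ) | p.1 ∈ Set.Ico 0 T}) ∧
      SolvesHeatOn N T σ I (v I i) (dom N T D v I) ∧
      (∃ C : ℝ, ∀ t ∈ Set.Ico (0 : ℝ) T, ∀ x : Fin N → ℝ, |v I i t x| ≤ C) ∧
      ContinuousOn (fun p : ℝ × (Fin N → ℝ) => v I i p.1 p.2)
        {p : ℝ × (Fin N → ℝ) | p.1 ∈ Set.Ico 0 T} ∧
      (∀ t ∈ Set.Icc (0 : ℝ) T, ∀ x : Fin N → ℝ, (t, x) ∉ domT N T D v I →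
        v I i t x = bdryFun N D v I i t x) ∧
      (∀ x : Fin N → ℝ, (T, x) ∈ domT N T D v I → v I i T x = 0) ∧
      (∀ K : Set (Fin N → ℝ), IsCompact K → ({T} ×ˢ K ⊆ domT N T D v I) →
        Tendsto (fun t => sSup ((fun x => |v I i t x - v I i T x|) '' K)) (𝓝[<] T) (𝓝 0))

/-- A classical solution is nonincreasing if it is jointly nonincreasing in time and
(componentwise, over the coordinates of `I`) in space. -/
def IsNonincreasingSol (v : Finset (Fin N) → Fin N → ℝ → (Fin N → ℝ) → ℝ) : Prop :=
  ∀ I : Finset (Fin N), ∀ i ∈ I, ∀ s t : ℝ, ∀ x y : Fin N → ℝ,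
    s ∈ Set.Icc (0 : ℝ) T → t ∈ Set.Icc (0 : ℝ) T → s ≤ t → (∀ j ∈ I, y j ≤ x j) →
    v I i t x ≤ v I i s y

/-!
Fix the time `t`. If `ℓ` is killed in the configuration `I`, then `v^{I,i} = v^{I∖ℓ,i}`: this is
proved by strong induction on `I`. The boundary condition gives the claim for one killed index `k`.
For another one `ℓ`, comparison of the levels `I∖ℓ` and `I∖{ℓ,k}` keeps `ℓ` killed in `I∖k`,
symmetrically `k` stays killed in `I∖ℓ`, and both values equal `v^{I∖{ℓ,k},i}`.

The comparison of the levels `I` and `I∖ℓ` comes from pushing the particle `ℓ` down to its boundary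
level: this increases `v^{I,i}`, does not affect `v^{I∖ℓ,i}`, and makes the two coincide.
-/

section

variable {N} {T σ} {D} {v : Finset (Fin N) → Fin N → ℝ → (Fin N → ℝ) → ℝ}
  {I J : Finset (Fin N)} {i l k : Fin N} {t a : ℝ} {x y : Fin N → ℝ}

/-- A cascade of functions that, at the fixed time `t`, are nonincreasing in space and satisfy the
boundary condition of the moving-boundary problem. Any killed index may be used to evaluate the
boundary condition, possibly a different one for each component `i`; the components `i ∉ I` are
subject to the same two requirements as the others. -/
structure IsAntitoneCascadeAt (D : Fin N → Fin N → ℝ)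
    (v : Finset (Fin N) → Fin N → ℝ → (Fin N → ℝ) → ℝ) (t : ℝ) : Prop where
  le_of_le : ∀ (I : Finset (Fin N)) (i : Fin N) ⦃x y : Fin N → ℝ⦄,
    (∀ j ∈ I, y j ≤ x j) → v I i t x ≤ v I i t y
  exists_eq_erase : ∀ (I : Finset (Fin N)) (i : Fin N) (x : Fin N → ℝ),
    (killedSet N D v I t x).Nonempty →
      ∃ k ∈ killedSet N D v I t x, v I i t x = v (I.erase k) i t x

theorem mem_killedSet :
    l ∈ killedSet N D v I t x ↔ l ∈ I ∧ x l ≤ bdrySum N D v I l t x :=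
  Finset.mem_filter

theorem notMem_domT_of_killedSet_nonempty (h : (killedSet N D v I t x).Nonempty) :
    (t, x) ∉ domT N T D v I := by
  obtain ⟨l, hl⟩ := h
  obtain ⟨hlI, hle⟩ := mem_killedSet.1 hl
  exact fun hdom => (hdom.2 l hlI).not_ge hle

theorem bdrySum_le_bdrySum (hD : ∀ j, 0 ≤ D l j)
    (h : ∀ j, v (I.erase l) j t x ≤ v (J.erase l) j t x) :
    bdrySum N D v I l t x ≤ bdrySum N D v J l t x :=
  Finset.sum_le_sum fun j _ => mul_le_mul_of_nonneg_left (h j) (hD j)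

theorem mem_killedSet_erase (hD : ∀ j, 0 ≤ D l j) (hl : l ∈ killedSet N D v I t x) (hlk : l ≠ k)
    (hle : ∀ j, v (I.erase l) j t x ≤ v ((I.erase l).erase k) j t x) :
    l ∈ killedSet N D v (I.erase k) t x := by
  obtain ⟨hlI, hxl⟩ := mem_killedSet.1 hl
  refine mem_killedSet.2 ⟨Finset.mem_erase.2 ⟨hlk, hlI⟩, hxl.trans (bdrySum_le_bdrySum hD ?_)⟩
  simpa only [Finset.erase_right_comm] using hle

namespace IsAntitoneCascadeAt

theorem eq_of_eq (hc : IsAntitoneCascadeAt D v t) (h : ∀ j ∈ I, x j = y j) :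
    v I i t x = v I i t y :=
  le_antisymm (hc.le_of_le I i fun j hj => (h j hj).ge) (hc.le_of_le I i fun j hj => (h j hj).le)

theorem apply_erase_update (hc : IsAntitoneCascadeAt D v t) :
    v (I.erase l) i t (Function.update x l a) = v (I.erase l) i t x :=
  hc.eq_of_eq fun _ hj => Function.update_of_ne (Finset.ne_of_mem_erase hj) a x

theorem bdrySum_update (hc : IsAntitoneCascadeAt D v t) :
    bdrySum N D v I l t (Function.update x l a) = bdrySum N D v I l t x := by
  simp only [bdrySum, hc.apply_erase_update]

theorem mem_killedSet_update (hc : IsAntitoneCascadeAt D v t) (hl : l ∈ I)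
    (ha : a ≤ bdrySum N D v I l t x) :
    l ∈ killedSet N D v I t (Function.update x l a) :=
  mem_killedSet.2 ⟨hl, by rwa [Function.update_self, hc.bdrySum_update]⟩

theorem le_erase_of_killed_eq_erase (hc : IsAntitoneCascadeAt D v t) (hl : l ∈ I)
    (heq : ∀ y, l ∈ killedSet N D v I t y → v I i t y = v (I.erase l) i t y) :
    v I i t x ≤ v (I.erase l) i t x := by
  set y := Function.update x l (min (x l) (bdrySum N D v I l t x))
  have hyx : y ≤ x := update_le_self_iff.2 (min_le_left _ _)
  calc v I i t x ≤ v I i t y := hc.le_of_le I i fun j _ => hyx j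
    _ = v (I.erase l) i t y := heq y (hc.mem_killedSet_update hl (min_le_right _ _))
    _ = v (I.erase l) i t x := hc.apply_erase_update

theorem eq_erase_of_mem_killedSet (hc : IsAntitoneCascadeAt D v t) (hD : ∀ i j, 0 ≤ D i j)
    (hl : l ∈ killedSet N D v I t x) : v I i t x = v (I.erase l) i t x := by
  induction I using Finset.strongInduction generalizing x i l with
  | H I ih =>
    obtain ⟨k, hk, hik⟩ := hc.exists_eq_erase I i x ⟨l, hl⟩
    obtain rfl | hlk := eq_or_ne l k
    · exact hik
    have erase_le {m n : Fin N} (hm : m ∈ killedSet N D v I t x)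
        (hn : n ∈ killedSet N D v I t x) (hnm : n ≠ m) (j : Fin N) :
        v (I.erase m) j t x ≤ v ((I.erase m).erase n) j t x :=
      hc.le_erase_of_killed_eq_erase (Finset.mem_erase.2 ⟨hnm, (mem_killedSet.1 hn).1⟩)
        fun _ => ih _ (Finset.erase_ssubset (mem_killedSet.1 hm).1)
    have hl_erase : l ∈ killedSet N D v (I.erase k) t x :=
      mem_killedSet_erase (hD l) hl hlk (erase_le hl hk hlk.symm)
    have hk_erase : k ∈ killedSet N D v (I.erase l) t x :=
      mem_killedSet_erase (hD k) hk hlk.symm (erase_le hk hl hlk)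
    calc v I i t x = v (I.erase k) i t x := hik
      _ = v ((I.erase k).erase l) i t x :=
        ih _ (Finset.erase_ssubset (mem_killedSet.1 hk).1) hl_erase
      _ = v ((I.erase l).erase k) i t x := by rw [Finset.erase_right_comm]
      _ = v (I.erase l) i t x :=
        (ih _ (Finset.erase_ssubset (mem_killedSet.1 hl).1) hk_erase).symm

theorem antitone_level (hc : IsAntitoneCascadeAt D v t) (hD : ∀ i j, 0 ≤ D i j) :
    Antitone fun I => v I i t x := by
  refine Finset.antitone_iff_forall_insert_le.2 fun I l hl => ?_
  have hle : v (insert l I) i t x ≤ v ((insert l I).erase l) i t x :=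
    hc.le_erase_of_killed_eq_erase (Finset.mem_insert_self l I) fun _ =>
      hc.eq_erase_of_mem_killedSet hD
  rwa [Finset.erase_insert hl] at hle

end IsAntitoneCascadeAt

theorem IsClassicalSolution.eq_of_notMem (hv : IsClassicalSolution N T σ D v)
    (ht : t ∈ Set.Icc 0 T) (hi : i ∉ I) : v I i t x = 1 :=
  (hv I).2.1 i hi t ht x

theorem IsClassicalSolution.eq_bdryFun (hv : IsClassicalSolution N T σ D v)
    (ht : t ∈ Set.Icc 0 T) (hi : i ∈ I) (hx : (t, x) ∉ domT N T D v I) :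
    v I i t x = bdryFun N D v I i t x := by
  obtain ⟨-, -, -, -, hbdry, -, -⟩ := (hv I).2.2 i hi
  exact hbdry t ht x hx

theorem IsClassicalSolution.isAntitoneCascadeAt (hv : IsClassicalSolution N T σ D v)
    (hmono : IsNonincreasingSol N T v) (ht : t ∈ Set.Icc 0 T) : IsAntitoneCascadeAt D v t where
  le_of_le I i x y hyx := by
    by_cases hi : i ∈ I
    · exact hmono I i hi t t x y ht ht le_rfl hyx
    · rw [hv.eq_of_notMem ht hi, hv.eq_of_notMem ht hi]
  exists_eq_erase I i x hkilled := by
    refine ⟨(killedSet N D v I t x).min' hkilled, Finset.min'_mem _ _, ?_⟩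
    by_cases hi : i ∈ I
    · rw [hv.eq_bdryFun ht hi (notMem_domT_of_killedSet_nonempty hkilled), bdryFun, dif_pos hkilled]
    · rw [hv.eq_of_notMem ht hi, hv.eq_of_notMem ht (mt Finset.mem_of_mem_erase hi)]

theorem classicalSolution_bdry_welldefined_and_level_monotone_general
    (hD : ∀ i j, 0 ≤ D i j) (hc : IsAntitoneCascadeAt D v t)
    (I : Finset (Fin N)) (x : Fin N → ℝ) :
    (∀ i : Fin N, ∀ l₁ ∈ killedSet N D v I t x, ∀ l₂ ∈ killedSet N D v I t x,
      v (I.erase l₁) i t x = v (I.erase l₂) i t x) ∧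
    (∀ i : Fin N, ∀ J ⊆ I, v I i t x ≤ v J i t x) := by
  refine ⟨fun i l₁ h₁ l₂ h₂ => ?_, fun i J hJI => hc.antitone_level hD hJI⟩
  rw [← hc.eq_erase_of_mem_killedSet hD h₁, hc.eq_erase_of_mem_killedSet hD h₂]

end

/-- for a nonincreasing classical solution, (i) the value `v^{I∖ℓ,i}_t(x^{−ℓ})` does
not depend on the choice of killed index `ℓ ∈ ℐ^I v(t,x)`, and (ii) the solution is monotone
between levels: `v^{J,i}_t(x^J) ≥ v^{I,i}_t(x)` for `J ⊆ I`. -/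
theorem classicalSolution_bdry_welldefined_and_level_monotone
    (hT : 0 < T) (hσ : 0 < σ) (hD : ∀ i j, 0 ≤ D i j)
    (v : Finset (Fin N) → Fin N → ℝ → (Fin N → ℝ) → ℝ)
    (hv : IsClassicalSolution N T σ D v) (hmono : IsNonincreasingSol N T v)
    (I : Finset (Fin N)) (hI : I.Nonempty)
    (t : ℝ) (ht : t ∈ Set.Icc (0 : ℝ) T) (x : Fin N → ℝ) :
    (∀ i : Fin N, ∀ l₁ ∈ killedSet N D v I t x, ∀ l₂ ∈ killedSet N D v I t x,
      v (I.erase l₁) i t x = v (I.erase l₂) i t x) ∧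
    (∀ i ∈ I, ∀ J ⊆ I, v I i t x ≤ v J i t x) :=
  have h := classicalSolution_bdry_welldefined_and_level_monotone_general hD
    (hv.isAntitoneCascadeAt hmono ht) I x
  ⟨h.1, fun i _ => h.2 i⟩
end

section
/- Let v be a nonincreasing classical solution of the cascade of moving-boundary PDEs. Let I ⊆ [N] be nonempty, (t,x) ∈ [0,T]×ℝ^I, and J ⊆ I. Then x_i ≤ Σ_{j=1}^N D_{ij} v^{J,j}_t(x^J) holds for all i ∈ I∖J if and only if I∖J ⊆ ℐ^I v(t,x). In particular, whenever J ⊆ I satisfies I∖J ⊆ ℐ^I v(t,x), one has v^{J,i}_t(x^J) = v^{I,i}_t(x) for all i ∈ I. -/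
open Set Filter
open scoped Topology

variable (N : ℕ) (T σ : ℝ) (D : Fin N → Fin N → ℝ)

/-!
The argument takes place at a fixed time and uses only the boundary rule and monotonicity in space.
Moving particle `k` down to its boundary level does not affect the configuration `I ∖ k`, kills `k`
and can only increase the values at level `I`; hence the values at level `I` are at most those at
level `I ∖ k`. So removing a particle raises the boundary levels of all others: killed particles
stay killed, and may be removed in any order.
-/

section KillingCascade

variable {ι α β : Type*} [DecidableEq ι]

/-- Particle `i` of the configuration `I` is killed: its position does not exceed the boundary level
it feels from the values of `u` for the other particles. The boundary level is an arbitrary function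
`Φ` of these values; the PDE cascade has `Φ w i = Σ_j D_{ij} w_j`. -/
def IsKilled [LE α] (Φ : (ι → β) → ι → α) (u : Finset ι → (ι → α) → ι → β)
    (I : Finset ι) (x : ι → α) (i : ι) : Prop :=
  i ∈ I ∧ x i ≤ Φ (u (I.erase i) x) i

/-- The order-theoretic content of a nonincreasing solution at a fixed time: `u I x i` stands for
`v^{I,i}_t(x^I)`, it is nonincreasing in the coordinates of `x` in `I`, and wherever some particle
is killed it is given by the configuration without one of the killed particles. Which killed
particle this is may depend on `I` and `x` in any way. -/
structure IsKillingCascade [Preorder α] [Preorder β] (Φ : (ι → β) → ι → α)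
    (u : Finset ι → (ι → α) → ι → β) : Prop where
  monotone_level : Monotone Φ
  antitone_position {I : Finset ι} {x y : ι → α} : (∀ j ∈ I, y j ≤ x j) → u I x ≤ u I y
  exists_eq_erase {I : Finset ι} {x : ι → α} :
    (∃ k, IsKilled Φ u I x k) → ∃ k, IsKilled Φ u I x k ∧ u I x = u (I.erase k) x

namespace IsKillingCascade

variable {Φ : (ι → β) → ι → α} {u : Finset ι → (ι → α) → ι → β}
  {I J : Finset ι} {x y : ι → α} {i k : ι}

theorem congr_position [Preorder α] [PartialOrder β] (h : IsKillingCascade Φ u)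
    (hxy : ∀ j ∈ I, x j = y j) : u I x = u I y :=
  le_antisymm (h.antitone_position fun j hj => (hxy j hj).ge)
    (h.antitone_position fun j hj => (hxy j hj).le)

theorem isKilled_erase_of_le [Preorder α] [Preorder β] (h : IsKillingCascade Φ u) (hik : i ≠ k)
    (hle : u (I.erase i) x ≤ u ((I.erase i).erase k) x) (hi : IsKilled Φ u I x i) :
    IsKilled Φ u (I.erase k) x i := by
  refine ⟨Finset.mem_erase.2 ⟨hik, hi.1⟩, hi.2.trans ?_⟩
  rw [Finset.erase_right_comm]
  exact h.monotone_level hle i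

variable [SemilatticeInf α] [PartialOrder β]

theorem le_erase_of_forall_isKilled_eq (h : IsKillingCascade Φ u)
    (heq : ∀ y, IsKilled Φ u I y k → u I y = u (I.erase k) y) (x : ι → α) :
    u I x ≤ u (I.erase k) x := by
  by_cases hk : k ∈ I
  · let y := Function.update x k (x k ⊓ Φ (u (I.erase k) x) k)
    have hyx : y ≤ x := update_le_self_iff.2 inf_le_left
    have hy : u (I.erase k) y = u (I.erase k) x :=
      h.congr_position fun j hj => Function.update_of_ne (Finset.ne_of_mem_erase hj) _ _
    have hkilled : IsKilled Φ u I y k := ⟨hk, by simp [hy, y]⟩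
    calc u I x ≤ u I y := h.antitone_position fun j _ => hyx j
      _ = u (I.erase k) y := heq y hkilled
      _ = u (I.erase k) x := hy
  · rw [Finset.erase_eq_of_notMem hk]

theorem eq_erase_of_isKilled (h : IsKillingCascade Φ u) (hk : IsKilled Φ u I x k) :
    u I x = u (I.erase k) x := by
  induction I using Finset.strongInduction generalizing x k with
  | H I ih =>
    obtain ⟨m, hm, hum⟩ := h.exists_eq_erase ⟨k, hk⟩
    obtain rfl | hkm := eq_or_ne k m
    · exact hum
    have hle {a : ι} (ha : a ∈ I) (b : ι) : u (I.erase a) x ≤ u ((I.erase a).erase b) x :=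
      h.le_erase_of_forall_isKilled_eq (fun _ => ih _ (Finset.erase_ssubset ha)) x
    have hk' : IsKilled Φ u (I.erase m) x k := h.isKilled_erase_of_le hkm (hle hk.1 m) hk
    have hm' : IsKilled Φ u (I.erase k) x m := h.isKilled_erase_of_le hkm.symm (hle hm.1 k) hm
    calc u I x = u (I.erase m) x := hum
      _ = u ((I.erase m).erase k) x := ih _ (Finset.erase_ssubset hm.1) hk'
      _ = u ((I.erase k).erase m) x := by rw [Finset.erase_right_comm]
      _ = u (I.erase k) x := (ih _ (Finset.erase_ssubset hk.1) hm').symm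

theorem antitone_configuration (h : IsKillingCascade Φ u) (x : ι → α) :
    Antitone fun I => u I x := by
  refine Finset.antitone_iff_forall_insert_le.2 fun I k hk => ?_
  simpa only [Finset.erase_insert hk] using
    h.le_erase_of_forall_isKilled_eq (I := insert k I) (k := k)
      (fun _ => h.eq_erase_of_isKilled) x

theorem le_level_of_isKilled (h : IsKillingCascade Φ u) (hJ : J ⊆ I) (hiJ : i ∉ J)
    (hi : IsKilled Φ u I x i) : x i ≤ Φ (u J x) i :=
  hi.2.trans <| h.monotone_level
    (h.antitone_configuration x (Finset.subset_erase.2 ⟨hJ, hiJ⟩)) i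

theorem eq_of_forall_le_level (h : IsKillingCascade Φ u) (hJ : J ⊆ I)
    (hx : ∀ i ∈ I \ J, x i ≤ Φ (u J x) i) : u J x = u I x := by
  induction I using Finset.strongInduction with
  | H I ih =>
    obtain rfl | hJI := hJ.eq_or_ssubset
    · rfl
    obtain ⟨k, hkI, hkJ⟩ := Finset.exists_of_ssubset hJI
    have herase : u J x = u (I.erase k) x :=
      ih _ (Finset.erase_ssubset hkI) (Finset.subset_erase.2 ⟨hJ, hkJ⟩) fun i hi =>
        hx i (Finset.sdiff_subset_sdiff (Finset.erase_subset k I) subset_rfl hi)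
    have hkilled : IsKilled Φ u I x k :=
      ⟨hkI, herase ▸ hx k (Finset.mem_sdiff.2 ⟨hkI, hkJ⟩)⟩
    exact herase.trans (h.eq_erase_of_isKilled hkilled).symm

theorem isKilled_of_forall_le_level (h : IsKillingCascade Φ u) (hJ : J ⊆ I)
    (hx : ∀ i ∈ I \ J, x i ≤ Φ (u J x) i) (hi : i ∈ I \ J) : IsKilled Φ u I x i := by
  obtain ⟨hiI, hiJ⟩ := Finset.mem_sdiff.1 hi
  have herase : u J x = u (I.erase i) x :=
    h.eq_of_forall_le_level (Finset.subset_erase.2 ⟨hJ, hiJ⟩) fun j hj =>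
      hx j (Finset.sdiff_subset_sdiff (Finset.erase_subset i I) subset_rfl hj)
  exact ⟨hiI, herase ▸ hx i hi⟩

end IsKillingCascade

theorem classicalSolution_multiple_killings_general [SemilatticeInf α] [PartialOrder β]
    {Φ : (ι → β) → ι → α} {u : Finset ι → (ι → α) → ι → β} (h : IsKillingCascade Φ u)
    {I J : Finset ι} (hJ : J ⊆ I) (x : ι → α) :
    ((∀ i ∈ I \ J, x i ≤ Φ (u J x) i) ↔ ∀ i ∈ I \ J, IsKilled Φ u I x i) ∧
    ((∀ i ∈ I \ J, IsKilled Φ u I x i) → u J x = u I x) := by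
  have hlevel (hkilled : ∀ i ∈ I \ J, IsKilled Φ u I x i) (i : ι) (hi : i ∈ I \ J) :
      x i ≤ Φ (u J x) i :=
    h.le_level_of_isKilled hJ (Finset.mem_sdiff.1 hi).2 (hkilled i hi)
  exact ⟨⟨fun hx _ => h.isKilled_of_forall_le_level hJ hx, hlevel⟩,
    fun hkilled => h.eq_of_forall_le_level hJ (hlevel hkilled)⟩

end KillingCascade

namespace IsClassicalSolution

variable {N T σ D} {v : Finset (Fin N) → Fin N → ℝ → (Fin N → ℝ) → ℝ} {I : Finset (Fin N)} {t : ℝ}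

theorem eq_one_of_notMem (hv : IsClassicalSolution N T σ D v) (ht : t ∈ Set.Icc (0 : ℝ) T)
    {i : Fin N} (hi : i ∉ I) (x : Fin N → ℝ) : v I i t x = 1 :=
  (hv I).2.1 i hi t ht x

theorem eq_erase_min' (hv : IsClassicalSolution N T σ D v) (ht : t ∈ Set.Icc (0 : ℝ) T)
    {x : Fin N → ℝ} (hne : (killedSet N D v I t x).Nonempty) (i : Fin N) :
    v I i t x = v (I.erase ((killedSet N D v I t x).min' hne)) i t x := by
  by_cases hi : i ∈ I
  · have hdom : (t, x) ∉ domT N T D v I := by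
      obtain ⟨k, hk⟩ := hne
      obtain ⟨hkI, hkx⟩ := Finset.mem_filter.1 hk
      exact fun hp => hkx.not_gt (hp.2 k hkI)
    obtain ⟨-, -, -, -, hbdry, -⟩ := (hv I).2.2 i hi
    rw [hbdry t ht x hdom, bdryFun, dif_pos hne]
  · rw [hv.eq_one_of_notMem ht hi,
      hv.eq_one_of_notMem ht fun hi' => hi (Finset.mem_of_mem_erase hi')]

theorem isKillingCascade (hv : IsClassicalSolution N T σ D v) (hmono : IsNonincreasingSol N T v)
    (hD : ∀ i j, 0 ≤ D i j) (ht : t ∈ Set.Icc (0 : ℝ) T) :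
    IsKillingCascade (fun w i => ∑ j, D i j * w j) fun I x i => v I i t x where
  monotone_level _ _ hw i :=
    Finset.sum_le_sum fun j _ => mul_le_mul_of_nonneg_left (hw j) (hD i j)
  antitone_position {I x y} hyx i := by
    by_cases hi : i ∈ I
    · exact hmono I i hi t t x y ht ht le_rfl hyx
    · exact ((hv.eq_one_of_notMem ht hi x).trans (hv.eq_one_of_notMem ht hi y).symm).le
  exists_eq_erase {I x} hkilled := by
    obtain ⟨k, hk⟩ := hkilled
    have hne : (killedSet N D v I t x).Nonempty := ⟨k, Finset.mem_filter.2 hk⟩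
    exact ⟨_, Finset.mem_filter.1 (Finset.min'_mem _ hne), funext (hv.eq_erase_min' ht hne)⟩

end IsClassicalSolution

/-- a set `I∖J` of particles is simultaneously killed if and only if each of them is
below the boundary level computed from the reduced configuration `J`; in that case the solution
at level `J` agrees with the solution at level `I`. -/
theorem classicalSolution_multiple_killings
    (hT : 0 < T) (hσ : 0 < σ) (hD : ∀ i j, 0 ≤ D i j)
    (v : Finset (Fin N) → Fin N → ℝ → (Fin N → ℝ) → ℝ)
    (hv : IsClassicalSolution N T σ D v) (hmono : IsNonincreasingSol N T v)
    (I : Finset (Fin N)) (hI : I.Nonempty)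
    (t : ℝ) (ht : t ∈ Set.Icc (0 : ℝ) T) (x : Fin N → ℝ)
    (J : Finset (Fin N)) (hJ : J ⊆ I) :
    ((∀ i ∈ I \ J, x i ≤ ∑ j, D i j * v J j t x) ↔ I \ J ⊆ killedSet N D v I t x) ∧
    (I \ J ⊆ killedSet N D v I t x → ∀ i ∈ I, v J i t x = v I i t x) := by
  have h := classicalSolution_multiple_killings_general (hv.isKillingCascade hmono hD ht) hJ x
  simp only [Finset.subset_iff, killedSet, Finset.mem_filter]
  exact ⟨h.1, fun hkilled i _ => congrFun (h.2 hkilled) i⟩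
end

section
/- Let v be a nonincreasing classical solution of the cascade of moving-boundary PDEs. Then for every I ⊆ [N], every i ∈ I, and every x ∈ ℝ^I, the terminal value satisfies v^{I,i}_T(x) = 1 if i ∈ ℐ^I v(T,x) and v^{I,i}_T(x) = 0 otherwise. -/
open Set Filter
open scoped Topology

variable (N : ℕ) (T σ : ℝ) (D : Fin N → Fin N → ℝ)

/-
At the terminal time the cascade is purely combinatorial. For fixed `x`, the particles outside
configuration `I` are dead, and a set `A` of dead particles sustains itself if every member in `I`
lies below the level `∑_{j ∈ A} D_{ij}`. The vector `v^I_T(x)` is the indicator of the *greatest*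
self-sustaining set. Indeed, declaring `k` dead from the start leaves this set unchanged when `k`
belongs to it already, whichever such `k` is chosen, so induction on `I` applies; and `k` belongs
to it exactly when `k` lies below the level that results from declaring `k` dead.
-/

section GreatestFixedPoint

variable {α : Type*} [CompleteLattice α] {f : α →o α} {a : α}

theorem gfp_sup_const_le (h : a ≤ f (f ⊔ OrderHom.const α a).gfp) :
    (f ⊔ OrderHom.const α a).gfp ≤ f.gfp :=
  f.le_gfp <| (f ⊔ OrderHom.const α a).map_gfp.ge.trans (sup_le le_rfl h)

theorem le_map_gfp_sup_const_iff :
    a ≤ f (f ⊔ OrderHom.const α a).gfp ↔ a ≤ f.gfp := by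
  constructor
  · intro h
    calc
      a ≤ (f ⊔ OrderHom.const α a) (f ⊔ OrderHom.const α a).gfp := le_sup_right
      _ = (f ⊔ OrderHom.const α a).gfp := OrderHom.map_gfp _
      _ ≤ f.gfp := gfp_sup_const_le h
  · intro h
    calc
      a ≤ f.gfp := h
      _ = f f.gfp := f.map_gfp.symm
      _ ≤ f (f ⊔ OrderHom.const α a).gfp := f.mono (OrderHom.gfp.mono le_sup_left)

theorem gfp_sup_const_eq (h : a ≤ f.gfp) : (f ⊔ OrderHom.const α a).gfp = f.gfp :=
  (gfp_sup_const_le (le_map_gfp_sup_const_iff.2 h)).antisymm (OrderHom.gfp.mono le_sup_left)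

end GreatestFixedPoint

section KillingCascade

open scoped Matrix

variable {ι R : Type*} [Fintype ι] [Semiring R] [PartialOrder R]

section DeadSet

variable [IsOrderedRing R] {L : Matrix ι ι R} (hL : ∀ i j, 0 ≤ L i j) (x : ι → R)
  {I : Finset ι} {k : ι}

/-- One round of contagion: given that the particles of `A` are dead, the particles that are dead
because they lie outside `I` or at or below the level caused by the deaths in `A`. -/
def contagion (I : Finset ι) : Set ι →o Set ι where
  toFun A := {i | i ∈ I → x i ≤ (L *ᵥ A.indicator 1) i}
  monotone' _ _ hAB i hi hiI := (hi hiI).trans <| Finset.sum_le_sum fun j _ =>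
    mul_le_mul_of_nonneg_left
      (Set.indicator_le_indicator_of_subset hAB (fun _ => zero_le_one) j) (hL i j)

/-- The greatest self-sustaining set of dead particles in the configuration `I`; it contains all
particles outside `I`. -/
def deadSet (I : Finset ι) : Set ι :=
  (contagion hL x I).gfp

theorem mem_deadSet_of_notMem (hk : k ∉ I) : k ∈ deadSet hL x I := by
  rw [deadSet, ← OrderHom.map_gfp]
  exact fun hkI => absurd hkI hk

variable [DecidableEq ι]

theorem contagion_erase :
    contagion hL x (I.erase k) = contagion hL x I ⊔ OrderHom.const (Set ι) {k} := by
  ext A i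
  change (i ∈ I.erase k → _) ↔ (i ∈ I → _) ∨ i = k
  rw [Finset.mem_erase]
  tauto

theorem deadSet_erase (hk : k ∈ deadSet hL x I) : deadSet hL x (I.erase k) = deadSet hL x I := by
  rw [deadSet, contagion_erase]
  exact gfp_sup_const_eq (Set.singleton_subset_iff.2 hk)

theorem le_mulVec_indicator_deadSet_erase_iff (hk : k ∈ I) :
    x k ≤ (L *ᵥ (deadSet hL x (I.erase k)).indicator 1) k ↔ k ∈ deadSet hL x I := by
  have h := le_map_gfp_sup_const_iff (f := contagion hL x I) (a := {k})
  rw [← contagion_erase] at h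
  calc
    _ ↔ k ∈ contagion hL x I (deadSet hL x (I.erase k)) := (forall_prop_of_true hk).symm
    _ ↔ k ∈ deadSet hL x I := by
      simpa only [deadSet, Set.singleton_subset_iff] using h

end DeadSet

variable [DecidableEq ι]

/-- The relations satisfied by the values `u I i = v^{I,i}_T(x)` of the cascade at a fixed
terminal point `(T, x)`. The particle removed from `I` may be any killed one, not just the one of
minimal index, and may depend on `i`. -/
structure IsKillingCascade_s9 (L : Matrix ι ι R) (x : ι → R) (u : Finset ι → ι → R) : Prop where
  eq_one_of_notMem : ∀ {I i}, i ∉ I → u I i = 1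
  eq_zero_of_forall_not_le : ∀ {I i}, i ∈ I →
    (∀ k ∈ I, ¬ x k ≤ (L *ᵥ u (I.erase k)) k) → u I i = 0
  exists_eq_erase : ∀ {I i}, i ∈ I → (∃ k ∈ I, x k ≤ (L *ᵥ u (I.erase k)) k) →
    ∃ k ∈ I, x k ≤ (L *ᵥ u (I.erase k)) k ∧ u I i = u (I.erase k) i

namespace IsKillingCascade_s9

variable [IsOrderedRing R] {L : Matrix ι ι R} {x : ι → R} {u : Finset ι → ι → R}

theorem eq_indicator_deadSet (hu : IsKillingCascade_s9 L x u) (hL : ∀ i j, 0 ≤ L i j)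
    (I : Finset ι) : u I = (deadSet hL x I).indicator 1 := by
  induction I using Finset.strongInduction with
  | H I ih =>
    have killed_iff : ∀ k ∈ I, x k ≤ (L *ᵥ u (I.erase k)) k ↔ k ∈ deadSet hL x I := by
      intro k hk
      rw [ih _ (Finset.erase_ssubset hk), le_mulVec_indicator_deadSet_erase_iff hL x hk]
    funext i
    by_cases hi : i ∈ I
    · by_cases hkilled : ∃ k ∈ I, x k ≤ (L *ᵥ u (I.erase k)) k
      · obtain ⟨k, hk, hxk, huk⟩ := hu.exists_eq_erase hi hkilled
        rw [huk, ih _ (Finset.erase_ssubset hk), deadSet_erase hL x ((killed_iff k hk).1 hxk)]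
      · have halive : ∀ k ∈ I, ¬ x k ≤ (L *ᵥ u (I.erase k)) k := by simpa using hkilled
        rw [hu.eq_zero_of_forall_not_le hi halive,
          Set.indicator_of_notMem fun hdead => halive i hi ((killed_iff i hi).2 hdead)]
    · rw [hu.eq_one_of_notMem hi, Set.indicator_of_mem (mem_deadSet_of_notMem hL x hi),
        Pi.one_apply]

theorem eq_ite (hu : IsKillingCascade_s9 L x u) (hL : ∀ i j, 0 ≤ L i j) {I : Finset ι} {i : ι}
    (hi : i ∈ I) [Decidable (x i ≤ (L *ᵥ u (I.erase i)) i)] :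
    u I i = if x i ≤ (L *ᵥ u (I.erase i)) i then 1 else 0 := by
  classical
  simp only [hu.eq_indicator_deadSet hL, le_mulVec_indicator_deadSet_erase_iff hL x hi,
    Set.indicator_apply, Pi.one_apply]

end IsKillingCascade_s9

end KillingCascade

section TerminalTime

variable {N T σ D} {v : Finset (Fin N) → Fin N → ℝ → (Fin N → ℝ) → ℝ} {I : Finset (Fin N)}
  {t : ℝ} {x : Fin N → ℝ}

theorem mem_domT_iff :
    (t, x) ∈ domT N T D v I ↔ t ∈ Set.Icc 0 T ∧ ∀ k ∈ I, ¬ x k ≤ bdrySum N D v I k t x := by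
  simp only [domT, Set.mem_ofPred_eq, not_le]

theorem exists_bdryFun_eq_erase (h : ∃ k ∈ I, x k ≤ bdrySum N D v I k t x) (i : Fin N) :
    ∃ k ∈ I, x k ≤ bdrySum N D v I k t x ∧ bdryFun N D v I i t x = v (I.erase k) i t x := by
  have hne : (killedSet N D v I t x).Nonempty := Finset.filter_nonempty_iff.2 h
  obtain ⟨hk, hxk⟩ := Finset.mem_filter.1 (Finset.min'_mem _ hne)
  exact ⟨_, hk, hxk, dif_pos hne⟩

theorem IsClassicalSolution.isKillingCascade_s9 (hv : IsClassicalSolution N T σ D v) (hT : 0 ≤ T)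
    (x : Fin N → ℝ) : IsKillingCascade_s9 (Matrix.of D) x fun I i => v I i T x where
  eq_one_of_notMem {I i} hi := (hv I).2.1 i hi T (right_mem_Icc.2 hT) x
  eq_zero_of_forall_not_le {I i} hi halive := by
    obtain ⟨-, -, -, -, -, hterminal, -⟩ := (hv I).2.2 i hi
    exact hterminal x (mem_domT_iff.2 ⟨right_mem_Icc.2 hT, halive⟩)
  exists_eq_erase {I i} hi hkilled := by
    obtain ⟨-, -, -, -, hboundary, -, -⟩ := (hv I).2.2 i hi
    have hdom : (T, x) ∉ domT N T D v I := fun h =>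
      let ⟨k, hk, hxk⟩ := hkilled
      (mem_domT_iff.1 h).2 k hk hxk
    obtain ⟨k, hk, hxk, hvk⟩ := exists_bdryFun_eq_erase hkilled i
    exact ⟨k, hk, hxk, (hboundary T (right_mem_Icc.2 hT) x hdom).trans hvk⟩

end TerminalTime

theorem classicalSolution_terminal_value_general (hT : 0 ≤ T) (hD : ∀ i j, 0 ≤ D i j)
    (v : Finset (Fin N) → Fin N → ℝ → (Fin N → ℝ) → ℝ) (hv : IsClassicalSolution N T σ D v) :
    ∀ I : Finset (Fin N), ∀ i ∈ I, ∀ x : Fin N → ℝ,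
      v I i T x = if i ∈ killedSet N D v I T x then 1 else 0 := by
  intro I i hi x
  have hmem : i ∈ killedSet N D v I T x ↔ x i ≤ bdrySum N D v I i T x := by
    simp only [killedSet, Finset.mem_filter, hi, true_and]
  simp only [hmem]
  exact (hv.isKillingCascade_s9 hT x).eq_ite hD hi

/-- the terminal value of a nonincreasing classical solution is the indicator of
the event that particle `i` is killed at `(T,x)`. -/
theorem classicalSolution_terminal_value
    (hT : 0 < T) (hσ : 0 < σ) (hD : ∀ i j, 0 ≤ D i j)
    (v : Finset (Fin N) → Fin N → ℝ → (Fin N → ℝ) → ℝ)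
    (hv : IsClassicalSolution N T σ D v) (hmono : IsNonincreasingSol N T v) :
    ∀ I : Finset (Fin N), ∀ i ∈ I, ∀ x : Fin N → ℝ,
      v I i T x = if i ∈ killedSet N D v I T x then 1 else 0 := by
  exact classicalSolution_terminal_value_general N T σ D hT.le hD v hv
end

section
/- Let v be a classical solution of the cascade of moving-boundary PDEs. Then for every nonempty I ⊆ [N], the domain 𝒟^I v is an open subset of [0,T]×ℝ^I. If moreover v is nonincreasing, then 𝒟^I_T v is also an open subset of [0,T]×ℝ^I. -/
open Set Filter
open scoped Topology

variable (N : ℕ) (T σ : ℝ) (D : Fin N → Fin N → ℝ)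

/-! Order independence drives the argument. If `v` is nonincreasing in space, then killing one more
particle can only increase `v`, i.e. `v^I ≤ v^{I∖k}`: lower `x_k` until `k` is killed, which by
locality changes neither the boundary level felt by `k` nor `v^{I∖k}`. Hence a killed particle
stays killed once another one is removed, so the particles killed at `(t, x)` may be removed in any
order.

Upper semicontinuity of every `v^{I,i}` on `[0,T] × ℝ^I` then follows by induction on `I`. Where
some `l` is killed, `v^I ≤ v^{I∖l}` everywhere with equality at the point, so the semicontinuity of
`v^{I∖l}` is inherited. Where all particles are alive, `v^I` is continuous: before time `T` by
hypothesis, and at time `T` because the induction makes `𝒟^I_T v` open, so that the terminal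
condition holds uniformly on a neighbourhood. Openness of `𝒟^I_T v` only needs upper
semicontinuity of the boundary levels. -/

section Topology

variable {X : Type*} [TopologicalSpace X]

lemma exists_isOpen_setOf_forall_lt_eq_inter {ι β : Type*} [Preorder β] {I : Finset ι}
    {f : ι → X → β} {s : Set X} (hf : ∀ i ∈ I, UpperSemicontinuousOn (f i) s) (b : β) :
    ∃ U : Set X, IsOpen U ∧ {p | p ∈ s ∧ ∀ i ∈ I, f i p < b} = U ∩ s := by
  choose! U hU hfU using fun i hi => upperSemicontinuousOn_iff_preimage_Iio.1 (hf i hi) b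
  refine ⟨⋂ i ∈ I, U i, isOpen_biInter_finset hU, ?_⟩
  ext p
  have mem_iff (hp : p ∈ s) (i : ι) (hi : i ∈ I) : f i p < b ↔ p ∈ U i := by
    simpa [hp] using Set.ext_iff.1 (hfU i hi) p
  simp only [mem_ofPred_eq, mem_inter_iff, mem_iInter]
  exact ⟨fun ⟨hp, h⟩ => ⟨fun i hi => (mem_iff hp i hi).1 (h i hi), hp⟩,
    fun ⟨h, hp⟩ => ⟨hp, fun i hi => (mem_iff hp i hi).2 (h i hi)⟩⟩

lemma continuousWithinAt_uncurry_of_tendstoUniformlyOn_const {A E : Type*} [TopologicalSpace A]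
    [UniformSpace E] {f : A → X → E} {s : Set A} {a : A} {x : X} {K : Set X} {c : E}
    (hK : K ∈ 𝓝 x) (hf : TendstoUniformlyOn f (fun _ => c) (𝓝[s] a) K)
    (hc : ∀ y ∈ K, f a y = c) :
    ContinuousWithinAt (fun p : A × X => f p.1 p.2) (Prod.fst ⁻¹' insert a s) (a, x) := by
  have hfa : Tendsto (fun p : A × X => f p.1 p.2) (pure a ×ˢ 𝓝 x) (𝓝 c) := by
    refine tendsto_const_nhds.congr' ?_
    rw [pure_prod]
    exact eventually_map.2 (mem_of_superset hK fun y hy => (hc y hy).symm)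
  have hfs : Tendsto (fun p : A × X => f p.1 p.2) (𝓝[s] a ×ˢ 𝓝 x) (𝓝 c) :=
    (tendsto_prod_filter_iff.2 hf.tendstoUniformlyOnFilter).mono_left
      (prod_mono_right _ (le_principal_iff.2 hK))
  rw [ContinuousWithinAt, ← prod_univ, nhdsWithin_prod_eq, nhdsWithin_univ, nhdsWithin_insert,
    sup_prod, hc x (mem_of_mem_nhds hK)]
  exact hfa.sup hfs

lemma tendstoUniformlyOn_of_tendsto_sSup_dist {ι Y E : Type*} [PseudoMetricSpace E]
    {F : ι → Y → E} {f : Y → E} {l : Filter ι} {K : Set Y}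
    (hbdd : ∀ᶠ t in l, BddAbove ((fun x => dist (F t x) (f x)) '' K))
    (hsup : Tendsto (fun t => sSup ((fun x => dist (F t x) (f x)) '' K)) l (𝓝 0)) :
    TendstoUniformlyOn F f l K := by
  refine Metric.tendstoUniformlyOn_iff.2 fun ε hε => ?_
  filter_upwards [hbdd, hsup.eventually_lt_const hε] with t ht hlt x hx
  rw [dist_comm]
  exact (le_csSup ht (mem_image_of_mem _ hx)).trans_lt hlt

end Topology

section Cascade

variable {N : ℕ} {T σ : ℝ} {D : Fin N → Fin N → ℝ}
  {v : Finset (Fin N) → Fin N → ℝ → (Fin N → ℝ) → ℝ}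

lemma upperSemicontinuousOn_bdrySum {I : Finset (Fin N)} {i : Fin N} {s : Set (ℝ × (Fin N → ℝ))}
    (hD : ∀ j, 0 ≤ D i j)
    (hv : ∀ j, UpperSemicontinuousOn (fun p => v (I.erase i) j p.1 p.2) s) :
    UpperSemicontinuousOn (fun p => bdrySum N D v I i p.1 p.2) s :=
  upperSemicontinuousOn_sum fun j _ =>
    (continuous_const_mul (D i j)).comp_upperSemicontinuousOn (hv j)
      (monotone_mul_left_of_nonneg (hD j))

lemma exists_isOpen_setOf_bdrySum_lt_eq_inter {I : Finset (Fin N)} {s : Set (ℝ × (Fin N → ℝ))}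
    (hD : ∀ i j, 0 ≤ D i j)
    (hv : ∀ i ∈ I, ∀ j, UpperSemicontinuousOn (fun p => v (I.erase i) j p.1 p.2) s) :
    ∃ U : Set (ℝ × (Fin N → ℝ)), IsOpen U ∧
      {p | p ∈ s ∧ ∀ i ∈ I, bdrySum N D v I i p.1 p.2 < p.2 i} = U ∩ s := by
  have husc (i : Fin N) (hi : i ∈ I) : UpperSemicontinuousOn
      (fun p : ℝ × (Fin N → ℝ) => bdrySum N D v I i p.1 p.2 + -p.2 i) s := by
    have hcoord : Continuous fun p : ℝ × (Fin N → ℝ) => -p.2 i := by fun_prop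
    exact (upperSemicontinuousOn_bdrySum (hD i) (hv i hi)).add
      hcoord.continuousOn.upperSemicontinuousOn
  simpa only [← sub_eq_add_neg, sub_neg] using exists_isOpen_setOf_forall_lt_eq_inter husc 0

variable (N T D v) in
/-- A cascade of functions on `[0,T]×ℝ^I` that reduces to a smaller configuration as soon as a
particle is killed and vanishes at time `T` while all particles are alive: the conditions on a
classical solution that involve neither the heat equation nor the regularity of the domains. As in
`bdrySum`, functions on `[0,T]×ℝ^I` are functions on `ℝ × (Fin N → ℝ)` that only depend on the
coordinates in `I`, at times in `[0,T]`. -/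
structure IsKillingCascade_s11 : Prop where
  congr : ∀ (I : Finset (Fin N)) (i : Fin N), ∀ t ∈ Icc 0 T, ∀ x y : Fin N → ℝ,
    (∀ j ∈ I, x j = y j) → v I i t x = v I i t y
  eq_one : ∀ I, ∀ i ∉ I, ∀ t ∈ Icc 0 T, ∀ x, v I i t x = 1
  eq_bdryFun : ∀ I, ∀ i ∈ I, ∀ t ∈ Icc 0 T, ∀ x, (t, x) ∉ domT N T D v I →
    v I i t x = bdryFun N D v I i t x
  continuousOn : ∀ I, ∀ i ∈ I,
    ContinuousOn (fun p : ℝ × (Fin N → ℝ) => v I i p.1 p.2) (Prod.fst ⁻¹' Ico 0 T)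
  eq_zero : ∀ I, ∀ i ∈ I, ∀ x, (T, x) ∈ domT N T D v I → v I i T x = 0
  tendstoUniformlyOn : ∀ I, ∀ i ∈ I, ∀ K, IsCompact K → {T} ×ˢ K ⊆ domT N T D v I →
    TendstoUniformlyOn (v I i) (v I i T) (𝓝[<] T) K

lemma IsClassicalSolution.isKillingCascade_s11 (hT : 0 < T) (hv : IsClassicalSolution N T σ D v) :
    IsKillingCascade_s11 N T D v where
  congr I := (hv I).1
  eq_one I := (hv I).2.1
  eq_bdryFun I i hi :=
    have ⟨_, _, _, _, hbdry, _, _⟩ := (hv I).2.2 i hi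
    hbdry
  continuousOn I i hi :=
    have ⟨_, _, _, hcont, _, _, _⟩ := (hv I).2.2 i hi
    hcont
  eq_zero I i hi :=
    have ⟨_, _, _, _, _, hzero, _⟩ := (hv I).2.2 i hi
    hzero
  tendstoUniformlyOn I i hi K hK hKdom := by
    obtain ⟨-, -, ⟨C, hC⟩, -, -, hzero, hlim⟩ := (hv I).2.2 i hi
    refine tendstoUniformlyOn_of_tendsto_sSup_dist ?_ (hlim K hK hKdom)
    filter_upwards [Ico_mem_nhdsLT hT] with t ht
    refine ⟨C, forall_mem_image.2 fun x hx => ?_⟩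
    rw [hzero x (hKdom ⟨rfl, hx⟩), Real.dist_0_eq_abs]
    exact hC t ht x

lemma IsNonincreasingSol.antitone (hmono : IsNonincreasingSol N T v)
    (hv : IsKillingCascade_s11 N T D v) (I : Finset (Fin N)) (i : Fin N) {t : ℝ} (ht : t ∈ Icc 0 T) :
    Antitone (v I i t) := by
  intro x y hxy
  by_cases hi : i ∈ I
  · exact hmono I i hi t t y x ht ht le_rfl fun j _ => hxy j
  · rw [hv.eq_one I i hi t ht, hv.eq_one I i hi t ht]

namespace IsKillingCascade_s11

section OrderIndependence

variable {t : ℝ}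

lemma apply_erase_update (hv : IsKillingCascade_s11 N T D v) (ht : t ∈ Icc 0 T) (I : Finset (Fin N))
    (i k : Fin N) (x : Fin N → ℝ) (c : ℝ) :
    v (I.erase k) i t (Function.update x k c) = v (I.erase k) i t x :=
  hv.congr _ i t ht _ _ fun _ hj => Function.update_of_ne (Finset.ne_of_mem_erase hj) c x

lemma bdrySum_update (hv : IsKillingCascade_s11 N T D v) (ht : t ∈ Icc 0 T) (I : Finset (Fin N))
    (k : Fin N) (x : Fin N → ℝ) (c : ℝ) :
    bdrySum N D v I k t (Function.update x k c) = bdrySum N D v I k t x :=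
  Finset.sum_congr rfl fun j _ => by rw [hv.apply_erase_update ht]

lemma exists_killed_forall_eq_erase (hv : IsKillingCascade_s11 N T D v) (ht : t ∈ Icc 0 T)
    {I : Finset (Fin N)} {k : Fin N} {x : Fin N → ℝ} (hk : k ∈ I)
    (hkx : x k ≤ bdrySum N D v I k t x) :
    ∃ l ∈ I, x l ≤ bdrySum N D v I l t x ∧ ∀ i, v I i t x = v (I.erase l) i t x := by
  have hne : (killedSet N D v I t x).Nonempty := ⟨k, Finset.mem_filter.2 ⟨hk, hkx⟩⟩
  obtain ⟨hlI, hlx⟩ := Finset.mem_filter.1 (Finset.min'_mem _ hne)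
  refine ⟨_, hlI, hlx, fun i => ?_⟩
  by_cases hi : i ∈ I
  · rw [hv.eq_bdryFun I i hi t ht x fun halive => (halive.2 k hk).not_ge hkx, bdryFun, dif_pos hne]
  · rw [hv.eq_one I i hi t ht, hv.eq_one _ i (mt Finset.mem_of_mem_erase hi) t ht]

lemma le_erase_of_eq_erase_of_killed (hv : IsKillingCascade_s11 N T D v) (ht : t ∈ Icc 0 T)
    {I : Finset (Fin N)} {i k : Fin N} (hmono : Antitone (v I i t))
    (heq : ∀ x, x k ≤ bdrySum N D v I k t x → v I i t x = v (I.erase k) i t x) (x : Fin N → ℝ) :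
    v I i t x ≤ v (I.erase k) i t x := by
  set c := min (x k) (bdrySum N D v I k t x)
  have hkilled : Function.update x k c k ≤ bdrySum N D v I k t (Function.update x k c) := by
    rw [hv.bdrySum_update ht, Function.update_self]
    exact min_le_right _ _
  calc v I i t x
      ≤ v I i t (Function.update x k c) :=
        hmono (update_le_self_iff.2 (min_le_left _ _))
    _ = v (I.erase k) i t (Function.update x k c) := heq _ hkilled
    _ = v (I.erase k) i t x := hv.apply_erase_update ht I i k x c

lemma eq_erase_of_killed (hD : ∀ i j, 0 ≤ D i j) (hv : IsKillingCascade_s11 N T D v)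
    (ht : t ∈ Icc 0 T) (hmono : ∀ I i, Antitone (v I i t)) {I : Finset (Fin N)} {k : Fin N}
    (hk : k ∈ I) (i : Fin N) (x : Fin N → ℝ) (hkx : x k ≤ bdrySum N D v I k t x) :
    v I i t x = v (I.erase k) i t x := by
  induction I using Finset.strongInduction generalizing k i x with
  | H I ih =>
    have killed_erase {a b : Fin N} (ha : a ∈ I) (hb : b ∈ I) (hab : a ≠ b)
        (hax : x a ≤ bdrySum N D v I a t x) : x a ≤ bdrySum N D v (I.erase b) a t x := by
      refine hax.trans (Finset.sum_le_sum fun j _ => mul_le_mul_of_nonneg_left ?_ (hD a j))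
      rw [Finset.erase_right_comm]
      exact hv.le_erase_of_eq_erase_of_killed ht (hmono _ _)
        (ih _ (Finset.erase_ssubset ha) (Finset.mem_erase.2 ⟨hab.symm, hb⟩) j) x
    have erase_eq_erase_erase {a b : Fin N} (ha : a ∈ I) (hb : b ∈ I) (hab : a ≠ b)
        (hax : x a ≤ bdrySum N D v I a t x) :
        v (I.erase b) i t x = v ((I.erase b).erase a) i t x :=
      ih _ (Finset.erase_ssubset hb) (Finset.mem_erase.2 ⟨hab, ha⟩) i x
        (killed_erase ha hb hab hax)
    obtain ⟨l, hl, hlx, hvl⟩ := hv.exists_killed_forall_eq_erase ht hk hkx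
    obtain rfl | hkl := eq_or_ne k l
    · exact hvl i
    calc v I i t x
        = v (I.erase l) i t x := hvl i
      _ = v ((I.erase l).erase k) i t x := erase_eq_erase_erase hk hl hkl hkx
      _ = v ((I.erase k).erase l) i t x := by rw [Finset.erase_right_comm]
      _ = v (I.erase k) i t x := (erase_eq_erase_erase hl hk hkl.symm hlx).symm

lemma le_erase (hD : ∀ i j, 0 ≤ D i j) (hv : IsKillingCascade_s11 N T D v) (ht : t ∈ Icc 0 T)
    (hmono : ∀ I i, Antitone (v I i t)) {I : Finset (Fin N)} {k : Fin N} (hk : k ∈ I) (i : Fin N)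
    (x : Fin N → ℝ) : v I i t x ≤ v (I.erase k) i t x :=
  hv.le_erase_of_eq_erase_of_killed ht (hmono I i)
    (fun y => hv.eq_erase_of_killed hD ht hmono hk i y) x

end OrderIndependence

lemma continuousOn_Ico (hv : IsKillingCascade_s11 N T D v) (I : Finset (Fin N)) (i : Fin N) :
    ContinuousOn (fun p : ℝ × (Fin N → ℝ) => v I i p.1 p.2) (Prod.fst ⁻¹' Ico 0 T) := by
  by_cases hi : i ∈ I
  · exact hv.continuousOn I i hi
  · exact continuousOn_const.congr fun p hp => hv.eq_one I i hi p.1 (Ico_subset_Icc_self hp) p.2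

lemma continuousWithinAt_terminal (hv : IsKillingCascade_s11 N T D v) {I : Finset (Fin N)} {i : Fin N}
    (hi : i ∈ I) {U : Set (ℝ × (Fin N → ℝ))} (hU : IsOpen U)
    (hdomU : domT N T D v I = U ∩ Prod.fst ⁻¹' Icc 0 T) {x : Fin N → ℝ}
    (hx : (T, x) ∈ domT N T D v I) :
    ContinuousWithinAt (fun p : ℝ × (Fin N → ℝ) => v I i p.1 p.2)
      (Prod.fst ⁻¹' Icc 0 T) (T, x) := by
  have hxU : (T, x) ∈ U := (hdomU ▸ hx).1
  have hslice : IsOpen {y | (T, y) ∈ U} := hU.preimage (by fun_prop)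
  obtain ⟨K, hKx, hKU, hK⟩ := local_compact_nhds (hslice.mem_nhds hxU)
  have hKdom (y : Fin N → ℝ) (hy : y ∈ K) : (T, y) ∈ domT N T D v I := by
    rw [hdomU]
    exact ⟨hKU hy, hx.1⟩
  have hzero (y : Fin N → ℝ) (hy : y ∈ K) : v I i T y = 0 := hv.eq_zero I i hi y (hKdom y hy)
  have huniform : TendstoUniformlyOn (v I i) (fun _ => 0) (𝓝[<] T) K := by
    refine (hv.tendstoUniformlyOn I i hi K hK ?_).congr_right hzero
    rintro ⟨_, y⟩ ⟨rfl, hy⟩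
    exact hKdom y hy
  refine (continuousWithinAt_uncurry_of_tendstoUniformlyOn_const hKx huniform hzero).mono ?_
  rw [Iio_insert]
  exact preimage_mono Icc_subset_Iic_self

lemma continuousWithinAt_of_mem_domT (hv : IsKillingCascade_s11 N T D v) {I : Finset (Fin N)}
    {i : Fin N} (hi : i ∈ I) {U : Set (ℝ × (Fin N → ℝ))} (hU : IsOpen U)
    (hdomU : domT N T D v I = U ∩ Prod.fst ⁻¹' Icc 0 T) {p : ℝ × (Fin N → ℝ)}
    (hp : p ∈ domT N T D v I) :
    ContinuousWithinAt (fun p : ℝ × (Fin N → ℝ) => v I i p.1 p.2) (Prod.fst ⁻¹' Icc 0 T) p := by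
  obtain ⟨t, x⟩ := p
  obtain htT | rfl : t < T ∨ t = T := hp.1.2.lt_or_eq
  · have hIco : Prod.fst ⁻¹' Ico 0 T ∈ 𝓝[Prod.fst ⁻¹' Icc 0 T] (t, x) :=
      mem_nhdsWithin.2 ⟨_, isOpen_Iio.preimage continuous_fst, htT, fun q hq => ⟨hq.2.1, hq.1⟩⟩
    exact (hv.continuousOn I i hi (t, x) ⟨hp.1.1, htT⟩).mono_of_mem_nhdsWithin hIco
  · exact hv.continuousWithinAt_terminal hi hU hdomU hp

lemma upperSemicontinuousOn (hD : ∀ i j, 0 ≤ D i j) (hv : IsKillingCascade_s11 N T D v)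
    (hmono : ∀ I i, ∀ t ∈ Icc 0 T, Antitone (v I i t)) (I : Finset (Fin N)) (i : Fin N) :
    UpperSemicontinuousOn (fun p => v I i p.1 p.2) (Prod.fst ⁻¹' Icc 0 T) := by
  induction I using Finset.strongInduction generalizing i with
  | H I ih =>
    by_cases hi : i ∈ I
    · intro p hp
      by_cases halive : p ∈ domT N T D v I
      · obtain ⟨U, hU, hdomU⟩ := exists_isOpen_setOf_bdrySum_lt_eq_inter hD
          fun k hk => ih (I.erase k) (Finset.erase_ssubset hk)
        exact (hv.continuousWithinAt_of_mem_domT hi hU hdomU halive).upperSemicontinuousWithinAt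
      · obtain ⟨l, hl, hlx⟩ : ∃ l ∈ I, p.2 l ≤ bdrySum N D v I l p.1 p.2 := by
          by_contra! hlt
          exact halive ⟨hp, hlt⟩
        intro b (hb : v I i p.1 p.2 < b)
        rw [hv.eq_erase_of_killed hD hp (hmono · · p.1 hp) hl i p.2 hlx] at hb
        filter_upwards [ih _ (Finset.erase_ssubset hl) i p hp b hb, self_mem_nhdsWithin]
          with q hqb hq
        exact (hv.le_erase hD hq (hmono · · q.1 hq) hl i q.2).trans_lt hqb
    · exact (continuousOn_const.congr fun p hp =>
        hv.eq_one I i hi p.1 hp p.2).upperSemicontinuousOn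

lemma exists_isOpen_dom_eq_inter (hD : ∀ i j, 0 ≤ D i j) (hv : IsKillingCascade_s11 N T D v)
    (I : Finset (Fin N)) :
    ∃ U : Set (ℝ × (Fin N → ℝ)), IsOpen U ∧ dom N T D v I = U ∩ Prod.fst ⁻¹' Icc 0 T := by
  obtain ⟨U, hU, hdomU⟩ := exists_isOpen_setOf_bdrySum_lt_eq_inter hD
    fun i (_ : i ∈ I) j => (hv.continuousOn_Ico (I.erase i) j).upperSemicontinuousOn
  refine ⟨U ∩ Prod.fst ⁻¹' Iio T, hU.inter (isOpen_Iio.preimage continuous_fst), ?_⟩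
  have hIco : Ico 0 T = Iio T ∩ Icc 0 T := by
    ext t
    grind
  calc dom N T D v I
      = {p | p ∈ Prod.fst ⁻¹' Ico 0 T ∧ ∀ i ∈ I, bdrySum N D v I i p.1 p.2 < p.2 i} := by
        ext p
        simp only [dom, domT, mem_inter_iff, mem_ofPred_eq, mem_preimage, hIco, mem_Iio]
        tauto
    _ = U ∩ Prod.fst ⁻¹' Ico 0 T := hdomU
    _ = U ∩ Prod.fst ⁻¹' Iio T ∩ Prod.fst ⁻¹' Icc 0 T := by
        rw [hIco, preimage_inter, inter_assoc]

lemma exists_isOpen_domT_eq_inter (hD : ∀ i j, 0 ≤ D i j) (hv : IsKillingCascade_s11 N T D v)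
    (hmono : ∀ I i, ∀ t ∈ Icc 0 T, Antitone (v I i t)) (I : Finset (Fin N)) :
    ∃ U : Set (ℝ × (Fin N → ℝ)), IsOpen U ∧ domT N T D v I = U ∩ Prod.fst ⁻¹' Icc 0 T :=
  exists_isOpen_setOf_bdrySum_lt_eq_inter hD
    fun i _ => hv.upperSemicontinuousOn hD hmono (I.erase i)

end IsKillingCascade_s11

theorem classicalSolution_domains_open_general (hD : ∀ i j, 0 ≤ D i j)
    (hv : IsKillingCascade_s11 N T D v) (I : Finset (Fin N)) :
    (∃ U : Set (ℝ × (Fin N → ℝ)), IsOpen U ∧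
      dom N T D v I = U ∩ {p : ℝ × (Fin N → ℝ) | p.1 ∈ Icc 0 T}) ∧
    ((∀ I i, ∀ t ∈ Icc 0 T, Antitone (v I i t)) →
      ∃ U : Set (ℝ × (Fin N → ℝ)), IsOpen U ∧
        domT N T D v I = U ∩ {p : ℝ × (Fin N → ℝ) | p.1 ∈ Icc 0 T}) :=
  ⟨hv.exists_isOpen_dom_eq_inter hD I, fun hmono => hv.exists_isOpen_domT_eq_inter hD hmono I⟩

end Cascade

/-- for a classical solution the domain `𝒟^I v` is open in `[0,T]×ℝ^I`, and if the
solution is moreover nonincreasing then so is `𝒟^I_T v`. -/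
theorem classicalSolution_domains_open
    (hT : 0 < T) (hσ : 0 < σ) (hD : ∀ i j, 0 ≤ D i j)
    (v : Finset (Fin N) → Fin N → ℝ → (Fin N → ℝ) → ℝ)
    (hv : IsClassicalSolution N T σ D v)
    (I : Finset (Fin N)) (hI : I.Nonempty) :
    (∃ U : Set (ℝ × (Fin N → ℝ)), IsOpen U ∧
      dom N T D v I = U ∩ {p : ℝ × (Fin N → ℝ) | p.1 ∈ Set.Icc 0 T}) ∧
    (IsNonincreasingSol N T v →
      ∃ U : Set (ℝ × (Fin N → ℝ)), IsOpen U ∧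
        domT N T D v I = U ∩ {p : ℝ × (Fin N → ℝ) | p.1 ∈ Set.Icc 0 T}) :=
  have hcascade := hv.isKillingCascade_s11 hT
  (classicalSolution_domains_open_general hD hcascade I).imp_right fun h hmono =>
    h fun J i _ ht => hmono.antitone hcascade J i ht
end

section
/- Let v be a nonincreasing classical solution of the cascade of moving-boundary PDEs. Then for every t ∈ [0,T] and every nonempty I ⊆ [N], the topological boundary of the set {x ∈ ℝ^I : (t,x) ∈ 𝒟^I_T v} equals {y + r(y)𝟏 : y ∈ E_I}, where 𝟏 ∈ ℝ^I is the all-ones vector, E_I = {y ∈ ℝ^I : Σ_{i∈I} y_i = 0}, and r : E_I → ℝ, defined by r(y) = inf{s ∈ ℝ : (t, y + s𝟏) ∈ 𝒟^I_T v}, is 1-Lipschitz with respect to the maximum norm on ℝ^I. In particular, this boundary has vanishing Lebesgue measure in ℝ^I. -/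
open Set Filter
open scoped Topology

variable (N : ℕ) (T σ : ℝ) (D : Fin N → Fin N → ℝ)

/-- The parametrisation `r(y) = inf{s ∈ ℝ : (t, y + s·𝟏) ∈ 𝒟^I_T v}` of the boundary of the
time-`t` section of the domain, defined on the hyperplane `E_I = {y : Σ_{i∈I} y_i = 0}`. -/
noncomputable def bdryParam (v : Finset (Fin N) → Fin N → ℝ → (Fin N → ℝ) → ℝ)
    (I : Finset (Fin N)) (t : ℝ) (y : Fin N → ℝ) : ℝ :=
  sInf {s : ℝ |
    (t, y + s • (fun j => if j ∈ I then (1 : ℝ) else 0)) ∈ domT N T D v I}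

/-!
Since `D ≥ 0` and the functions `v^{J,j}_t` are nonincreasing in space, the time-`t` section `S` of
the domain is an upper set of `ℝ^I`. Let `r(x)` be the parameter at which the line `s ↦ x + s𝟏`
enters `S`. If `y ≥ x - M𝟏`, then `S` being an upper set gives `r(y) ≤ r(x) + M`; hence `r` is
`1`-Lipschitz for the maximum norm and `r(x + s𝟏) = r(x) - s`. As `{r < 0} ⊆ S ⊆ {r ≤ 0}`, the
boundary of `S` is the zero set of `r`, and projecting this zero set along `𝟏` onto `E_I` exhibits
it as a graph. Boundaries of upper sets of `ℝ^n` are Lebesgue-null.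
-/

section EntryTime

variable {E : Type*} [AddCommGroup E] [Module ℝ E] {S : Set E} {f : E → ℝ} {e : E}

/-- The parameter at which the line `s ↦ x + s • e` enters `S`. It is meaningful when the set of
parameters `s` with `x + s • e ∈ S` is nonempty and bounded below, and is the junk value `0`
otherwise. -/
noncomputable def entryTime (S : Set E) (e x : E) : ℝ :=
  sInf {s : ℝ | x + s • e ∈ S}

theorem frontier_eq_setOf_eq_zero_of_map_add_smul [TopologicalSpace E] [ContinuousAdd E]
    [ContinuousSMul ℝ E] (hf : Continuous f) (hfe : ∀ x (s : ℝ), f (x + s • e) = f x - s)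
    (hneg : ∀ x, f x < 0 → x ∈ S) (hS : ∀ x ∈ S, f x ≤ 0) :
    frontier S = {x | f x = 0} := by
  ext x
  constructor
  · intro hx
    have hle : f x ≤ 0 := closure_minimal hS (isClosed_le hf continuous_const) hx.1
    have hge : 0 ≤ f x := not_lt.1 fun hlt =>
      hx.2 (interior_maximal hneg (isOpen_lt hf continuous_const) hlt)
    exact le_antisymm hle hge
  · intro (hx : f x = 0)
    have hline : Tendsto (fun s : ℝ => x + s • e) (𝓝 0) (𝓝 x) :=
      Continuous.tendsto' (by fun_prop) _ _ (by simp)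
    constructor
    · refine mem_closure_of_tendsto (b := 𝓝[>] 0) (hline.mono_left nhdsWithin_le_nhds) ?_
      filter_upwards [self_mem_nhdsWithin] with s (hs : 0 < s)
      exact hneg _ (by rw [hfe, hx]; linarith)
    · intro hint
      have hmem : ∀ᶠ s in 𝓝[<] (0 : ℝ), x + s • e ∈ S :=
        (hline.mono_left nhdsWithin_le_nhds).eventually (mem_interior_iff_mem_nhds.1 hint)
      obtain ⟨s, hsS, hs : s < 0⟩ := (hmem.and self_mem_nhdsWithin).exists
      have := hS _ hsS
      rw [hfe, hx] at this
      linarith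

theorem setOf_eq_zero_eq_image_of_map_add_smul
    (hfe : ∀ x (s : ℝ), f (x + s • e) = f x - s) (l : E →ₗ[ℝ] ℝ) (hl : l e ≠ 0) :
    {x | f x = 0} = (fun y => y + f y • e) '' {y | l y = 0} := by
  ext x
  constructor
  · intro (hx : f x = 0)
    have hfy : f (x + (-(l x / l e)) • e) = l x / l e := by rw [hfe, hx]; ring
    refine ⟨x + (-(l x / l e)) • e, ?_, ?_⟩
    · simp [hl]
    · simp only [hfy]
      module
  · rintro ⟨y, -, rfl⟩
    exact (hfe y (f y)).trans (sub_self _)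

end EntryTime

section UpperSetOver

variable {ι : Type*} {I : Finset ι} {S : Set (ι → ℝ)}

/-- `S` is an upper set for the preorder on `ι → ℝ` that compares only the coordinates in `I`.
This encodes an upper set of `ℝ^I` as a set of vectors indexed by all of `ι`. -/
def IsUpperSetOver (I : Finset ι) (S : Set (ι → ℝ)) : Prop :=
  ∀ ⦃x y : ι → ℝ⦄, (∀ i ∈ I, x i ≤ y i) → x ∈ S → y ∈ S

/-- `f` is antitone for the preorder on `ι → ℝ` that compares only the coordinates in `I`.
This encodes an antitone function on `ℝ^I` as a function of vectors indexed by all of `ι`. -/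
def AntitoneOver (I : Finset ι) (f : (ι → ℝ) → ℝ) : Prop :=
  ∀ ⦃x y : ι → ℝ⦄, (∀ i ∈ I, x i ≤ y i) → f y ≤ f x

theorem AntitoneOver.mono {J : Finset ι} {f : (ι → ℝ) → ℝ} (hf : AntitoneOver J f)
    (hJI : J ⊆ I) : AntitoneOver I f :=
  fun _ _ hxy => hf fun i hi => hxy i (hJI hi)

namespace IsUpperSetOver

theorem isUpperSet (hS : IsUpperSetOver I S) : IsUpperSet S :=
  fun _ _ hxy => hS fun i _ => hxy i

variable {e : ι → ℝ}

theorem nonempty_setOf_add_smul_mem (hS : IsUpperSetOver I S) (he : ∀ i ∈ I, e i = 1)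
    (hne : S.Nonempty) (x : ι → ℝ) : {s : ℝ | x + s • e ∈ S}.Nonempty := by
  obtain ⟨z, hz⟩ := hne
  obtain ⟨M, hM⟩ := (I.image (z - x)).exists_le
  refine ⟨M, hS (fun i hi => ?_) hz⟩
  have : z i - x i ≤ M := hM _ (Finset.mem_image_of_mem _ hi)
  simp only [Pi.add_apply, Pi.smul_apply, he i hi, smul_eq_mul, mul_one]
  linarith

theorem bddBelow_setOf_add_smul_mem (hS : IsUpperSetOver I S) (he : ∀ i ∈ I, e i = 1)
    (huniv : S ≠ univ) (x : ι → ℝ) : BddBelow {s : ℝ | x + s • e ∈ S} := by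
  obtain ⟨z, hz⟩ := (ne_univ_iff_exists_notMem S).1 huniv
  obtain ⟨M, hM⟩ := (I.image (x - z)).exists_le
  refine ⟨-M, fun s hs => not_lt.1 fun hsM => hz (hS (fun i hi => ?_) hs)⟩
  have : x i - z i ≤ M := hM _ (Finset.mem_image_of_mem _ hi)
  simp only [Pi.add_apply, Pi.smul_apply, he i hi, smul_eq_mul, mul_one]
  linarith

theorem entryTime_le_add (hS : IsUpperSetOver I S) (he : ∀ i ∈ I, e i = 1)
    (hne : S.Nonempty) (huniv : S ≠ univ) {x y : ι → ℝ} {M : ℝ}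
    (hxy : ∀ i ∈ I, x i ≤ y i + M) : entryTime S e y ≤ entryTime S e x + M := by
  rw [← sub_le_iff_le_add]
  refine le_csInf (hS.nonempty_setOf_add_smul_mem he hne x) fun s hs => ?_
  rw [sub_le_iff_le_add]
  refine csInf_le (hS.bddBelow_setOf_add_smul_mem he huniv y) (hS (fun i hi => ?_) hs)
  simp only [Pi.add_apply, Pi.smul_apply, he i hi, smul_eq_mul, mul_one]
  linarith [hxy i hi]

theorem entryTime_add_smul (hS : IsUpperSetOver I S) (he : ∀ i ∈ I, e i = 1)
    (hne : S.Nonempty) (huniv : S ≠ univ) (x : ι → ℝ) (s : ℝ) :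
    entryTime S e (x + s • e) = entryTime S e x - s := by
  have hadd : ∀ i ∈ I, (x + s • e) i = x i + s := fun i hi => by simp [he i hi]
  apply le_antisymm
  · rw [sub_eq_add_neg]
    exact hS.entryTime_le_add he hne huniv fun i hi => by rw [hadd i hi]; linarith
  · rw [sub_le_iff_le_add]
    exact hS.entryTime_le_add he hne huniv fun i hi => (hadd i hi).le

theorem abs_entryTime_sub_le (hS : IsUpperSetOver I S) (he : ∀ i ∈ I, e i = 1)
    (hne : S.Nonempty) (huniv : S ≠ univ) (hI : I.Nonempty) (x y : ι → ℝ) :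
    |entryTime S e x - entryTime S e y| ≤ I.sup' hI fun i => |x i - y i| := by
  have hsup : ∀ i ∈ I, |x i - y i| ≤ I.sup' hI fun i => |x i - y i| :=
    fun i hi => Finset.le_sup' (fun i => |x i - y i|) hi
  rw [abs_sub_le_iff, sub_le_iff_le_add', sub_le_iff_le_add']
  constructor <;> refine hS.entryTime_le_add he hne huniv fun i hi => ?_
  · linarith [neg_abs_le (x i - y i), hsup i hi]
  · linarith [le_abs_self (x i - y i), hsup i hi]

theorem continuous_entryTime (hS : IsUpperSetOver I S) (he : ∀ i ∈ I, e i = 1)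
    (hne : S.Nonempty) (huniv : S ≠ univ) (hI : I.Nonempty) : Continuous (entryTime S e) := by
  refine continuous_iff_continuousAt.2 fun x => tendsto_iff_dist_tendsto_zero.2 ?_
  refine squeeze_zero (fun _ => dist_nonneg)
    (fun z => hS.abs_entryTime_sub_le he hne huniv hI z x) ?_
  refine Continuous.tendsto' (Continuous.finset_sup'_apply hI fun i _ => by fun_prop) _ _ ?_
  simp

theorem frontier_eq_setOf_entryTime_eq_zero (hS : IsUpperSetOver I S) (he : ∀ i ∈ I, e i = 1)
    (hne : S.Nonempty) (huniv : S ≠ univ) (hI : I.Nonempty) :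
    frontier S = {x | entryTime S e x = 0} := by
  refine frontier_eq_setOf_eq_zero_of_map_add_smul (hS.continuous_entryTime he hne huniv hI)
    (hS.entryTime_add_smul he hne huniv) (fun x hx => ?_) fun x hx => ?_
  · obtain ⟨s, hs, hs0⟩ :=
      exists_lt_of_csInf_lt (hS.nonempty_setOf_add_smul_mem he hne x) hx
    exact hS (fun i hi => by simp [he i hi, hs0.le]) hs
  · exact csInf_le (hS.bddBelow_setOf_add_smul_mem he huniv x) (by simpa using hx)

theorem frontier_eq_image_entryTime (hS : IsUpperSetOver I S) (he : ∀ i ∈ I, e i = 1)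
    (hne : S.Nonempty) (huniv : S ≠ univ) (hI : I.Nonempty) :
    frontier S = (fun y => y + entryTime S e y • e) '' {y | ∑ i ∈ I, y i = 0} := by
  have hsum : (∑ i ∈ I, LinearMap.proj (R := ℝ) (φ := fun _ : ι => ℝ) i) e ≠ 0 := by
    simp [Finset.sum_congr rfl he, hI.ne_empty]
  rw [hS.frontier_eq_setOf_entryTime_eq_zero he hne huniv hI,
    setOf_eq_zero_eq_image_of_map_add_smul (hS.entryTime_add_smul he hne huniv) _ hsum]
  simp

end IsUpperSetOver

variable {g : ι → (ι → ℝ) → ℝ}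

theorem isUpperSetOver_setOf_forall_lt (hg : ∀ i ∈ I, AntitoneOver I (g i)) :
    IsUpperSetOver I {x | ∀ i ∈ I, g i x < x i} :=
  fun _ _ hxy hx i hi => (hg i hi hxy).trans_lt ((hx i hi).trans_le (hxy i hi))

theorem nonempty_setOf_forall_lt (hg : ∀ i ∈ I, AntitoneOver I (g i)) :
    {x : ι → ℝ | ∀ i ∈ I, g i x < x i}.Nonempty := by
  obtain ⟨M, hM⟩ := (I.image fun i => g i 0).exists_le
  refine ⟨fun _ => max 0 (M + 1), fun i hi => ?_⟩
  calc g i (fun _ => max 0 (M + 1)) ≤ g i 0 := hg i hi fun _ _ => le_max_left _ _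
    _ ≤ M := hM _ (Finset.mem_image_of_mem _ hi)
    _ < M + 1 := lt_add_one M
    _ ≤ max 0 (M + 1) := le_max_right _ _

theorem setOf_forall_lt_ne_univ (hI : I.Nonempty) (hg : ∀ i ∈ I, AntitoneOver I (g i)) :
    {x : ι → ℝ | ∀ i ∈ I, g i x < x i} ≠ univ := by
  obtain ⟨i, hi⟩ := hI
  refine (ne_univ_iff_exists_notMem _).2 ⟨fun _ => min 0 (g i 0), fun hmem => ?_⟩
  refine (hmem i hi).not_ge ?_
  calc min 0 (g i 0) ≤ g i 0 := min_le_right _ _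
    _ ≤ g i (fun _ => min 0 (g i 0)) := hg i hi fun _ _ => min_le_left _ _

end UpperSetOver

section Cascade

variable {N T σ D} {v : Finset (Fin N) → Fin N → ℝ → (Fin N → ℝ) → ℝ}
  {I : Finset (Fin N)} {t : ℝ}

theorem setOf_mem_domT (ht : t ∈ Set.Icc (0 : ℝ) T) :
    {x | (t, x) ∈ domT N T D v I} = {x | ∀ i ∈ I, bdrySum N D v I i t x < x i} :=
  Set.ext fun _ => and_iff_right ht

theorem antitoneOver_bdrySum {i : Fin N} (hD : ∀ j, 0 ≤ D i j)
    (hv : ∀ j, AntitoneOver (I.erase i) (v (I.erase i) j t)) :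
    AntitoneOver I (bdrySum N D v I i t) :=
  fun _ _ hxy => Finset.sum_le_sum fun j _ =>
    mul_le_mul_of_nonneg_left ((hv j).mono (I.erase_subset i) hxy) (hD j)

theorem IsNonincreasingSol.antitoneOver (hmono : IsNonincreasingSol N T v)
    (hv : IsClassicalSolution N T σ D v) (ht : t ∈ Set.Icc (0 : ℝ) T) (i : Fin N) :
    AntitoneOver I (v I i t) := by
  intro x y hxy
  by_cases hi : i ∈ I
  · exact hmono I i hi t t y x ht ht le_rfl hxy
  · rw [(hv I).2.1 i hi t ht, (hv I).2.1 i hi t ht]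

end Cascade

open MeasureTheory in
theorem classicalSolution_boundary_lipschitz_graph_general
    (hD : ∀ i j, 0 ≤ D i j)
    (v : Finset (Fin N) → Fin N → ℝ → (Fin N → ℝ) → ℝ)
    (t : ℝ) (ht : t ∈ Set.Icc (0 : ℝ) T)
    (I : Finset (Fin N)) (hI : I.Nonempty)
    (hv : ∀ i ∈ I, ∀ j, AntitoneOver (I.erase i) (v (I.erase i) j t)) :
    frontier {x : Fin N → ℝ | (t, x) ∈ domT N T D v I} =
      (fun y : Fin N → ℝ =>
          y + bdryParam N T D v I t y • (fun j => if j ∈ I then (1 : ℝ) else 0)) ''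
        {y : Fin N → ℝ | ∑ i ∈ I, y i = 0} ∧
    (∀ y₁ ∈ {y : Fin N → ℝ | ∑ i ∈ I, y i = 0},
      ∀ y₂ ∈ {y : Fin N → ℝ | ∑ i ∈ I, y i = 0},
        |bdryParam N T D v I t y₁ - bdryParam N T D v I t y₂| ≤
          I.sup' hI fun i => |y₁ i - y₂ i|) ∧
    volume (frontier {x : Fin N → ℝ | (t, x) ∈ domT N T D v I}) = 0 := by
  have hg : ∀ i ∈ I, AntitoneOver I (bdrySum N D v I i t) :=
    fun i hi => antitoneOver_bdrySum (hD i) (hv i hi)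
  have hS : IsUpperSetOver I {x | (t, x) ∈ domT N T D v I} :=
    setOf_mem_domT ht ▸ isUpperSetOver_setOf_forall_lt hg
  have hne : {x | (t, x) ∈ domT N T D v I}.Nonempty :=
    setOf_mem_domT ht ▸ nonempty_setOf_forall_lt hg
  have huniv : {x | (t, x) ∈ domT N T D v I} ≠ univ :=
    setOf_mem_domT ht ▸ setOf_forall_lt_ne_univ hI hg
  have he : ∀ i ∈ I, (if i ∈ I then (1 : ℝ) else 0) = 1 := fun _ hi => if_pos hi
  exact ⟨hS.frontier_eq_image_entryTime he hne huniv hI,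
    fun y₁ _ y₂ _ => hS.abs_entryTime_sub_le he hne huniv hI y₁ y₂,
    hS.isUpperSet.null_frontier⟩

open MeasureTheory in
/-- the boundary of the time-`t` section of `𝒟^I_T v` is the graph
`{y + r(y)𝟏 : y ∈ E_I}` of the `1`-Lipschitz (for the maximum norm over the coordinates of `I`)
function `r`, and in particular it is Lebesgue-null. -/
theorem classicalSolution_boundary_lipschitz_graph
    (hT : 0 < T) (hσ : 0 < σ) (hD : ∀ i j, 0 ≤ D i j)
    (v : Finset (Fin N) → Fin N → ℝ → (Fin N → ℝ) → ℝ)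
    (hv : IsClassicalSolution N T σ D v) (hmono : IsNonincreasingSol N T v)
    (t : ℝ) (ht : t ∈ Set.Icc (0 : ℝ) T)
    (I : Finset (Fin N)) (hI : I.Nonempty) :
    frontier {x : Fin N → ℝ | (t, x) ∈ domT N T D v I} =
      (fun y : Fin N → ℝ =>
          y + bdryParam N T D v I t y • (fun j => if j ∈ I then (1 : ℝ) else 0)) ''
        {y : Fin N → ℝ | ∑ i ∈ I, y i = 0} ∧
    (∀ y₁ ∈ {y : Fin N → ℝ | ∑ i ∈ I, y i = 0},
      ∀ y₂ ∈ {y : Fin N → ℝ | ∑ i ∈ I, y i = 0},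
        |bdryParam N T D v I t y₁ - bdryParam N T D v I t y₂| ≤
          I.sup' hI fun i => |y₁ i - y₂ i|) ∧
    volume (frontier {x : Fin N → ℝ | (t, x) ∈ domT N T D v I}) = 0 :=
  classicalSolution_boundary_lipschitz_graph_general N T D hD v t ht I hI
    fun _ _ => hmono.antitoneOver hv ht
end
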